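/- Let H = H_N ⊗ H_N̄ be a finite-dimensional bipartite Hilbert space and let L_j = L_N ⊗ I_N̄ be a neighborhood QDS generator, i.e., a QDS generator admitting a Lindblad representation in which the Hamiltonian and all noise operators have the form X_N ⊗ I_N̄. If a density operator ρ on H satisfies L_j(ρ) = 0, then F_{ρ_N}(Σ_N(ρ)) ⊗ B(H_N̄) ⊆ ker(L_j), where ρ_N = Tr_N̄(ρ) and Σ_N(ρ) = {Tr_N̄[(I_N ⊗ B)ρ] : B ∈ B(H_N̄)} is the operator Schmidt span of ρ on N. -/

import Mathlib

namespace QDS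

open Matrix
open scoped ComplexOrder

/-! ### Basic single-system notions -/

section Single

variable {ι : Type*} [Fintype ι] [DecidableEq ι]

open Classical in
/-- The (unique) positive-semidefinite square root of a positive-semidefinite matrix
(junk value `0` if no positive-semidefinite square root exists). -/
noncomputable def msqrt (A : Matrix ι ι ℂ) : Matrix ι ι ℂ :=
  if h : ∃ B : Matrix ι ι ℂ, B.PosSemidef ∧ B * B = A then h.choose else 0

open Classical in
/-- The Moore–Penrose pseudoinverse of a matrix, defined via its characterizing
properties (it always exists and is unique for complex matrices). -/
noncomputable def mpinv (A : Matrix ι ι ℂ) : Matrix ι ι ℂ :=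
  if h : ∃ B : Matrix ι ι ℂ,
      A * B * A = A ∧ B * A * B = B ∧ (A * B)ᴴ = A * B ∧ (B * A)ᴴ = B * A
  then h.choose else 0

/-- A density operator: positive semidefinite with unit trace. -/
def IsDensity (ρ : Matrix ι ι ℂ) : Prop := ρ.PosSemidef ∧ ρ.trace = 1

/-- A CPTP map in Kraus (operator-sum) form. -/
def IsCPTP (T : Matrix ι ι ℂ →ₗ[ℂ] Matrix ι ι ℂ) : Prop :=
  ∃ (m : ℕ) (M : Fin m → Matrix ι ι ℂ),
    (∀ X, T X = ∑ k, M k * X * (M k)ᴴ) ∧ (∑ k, (M k)ᴴ * M k) = 1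

/-- The Lindblad (QDS) generator with Hamiltonian `Hm` and noise operators `Lk`:
`L(X) = -i[Hm, X] + Σₖ (Lₖ X Lₖ† - ½{Lₖ†Lₖ, X})`. -/
noncomputable def lindbladMap (Hm : Matrix ι ι ℂ) {m : ℕ} (Lk : Fin m → Matrix ι ι ℂ) :
    Matrix ι ι ℂ →ₗ[ℂ] Matrix ι ι ℂ :=
  (-Complex.I) • (LinearMap.mulLeft ℂ Hm - LinearMap.mulRight ℂ Hm) +
    ∑ k, ((LinearMap.mulRight ℂ (Lk k)ᴴ).comp (LinearMap.mulLeft ℂ (Lk k)) -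
      ((1 : ℂ)/2) • (LinearMap.mulLeft ℂ ((Lk k)ᴴ * Lk k) +
        LinearMap.mulRight ℂ ((Lk k)ᴴ * Lk k)))

/-- `L` is a QDS (Lindblad) generator. -/
def IsLindblad (L : Matrix ι ι ℂ →ₗ[ℂ] Matrix ι ι ℂ) : Prop :=
  ∃ Hm : Matrix ι ι ℂ, Hm.IsHermitian ∧
    ∃ (m : ℕ) (Lk : Fin m → Matrix ι ι ℂ), L = lindbladMap Hm Lk

/-- `Ld` is the Hilbert–Schmidt adjoint of `L` (w.r.t. `⟨X,Y⟩ = Tr(X†Y)`). -/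
def IsHSAdjoint (L Ld : Matrix ι ι ℂ →ₗ[ℂ] Matrix ι ι ℂ) : Prop :=
  ∀ X Y : Matrix ι ι ℂ, ((Ld X)ᴴ * Y).trace = (Xᴴ * L Y).trace

/-- The fixed-point set of a (super)operator. -/
def fixSet (T : Matrix ι ι ℂ →ₗ[ℂ] Matrix ι ι ℂ) : Set (Matrix ι ι ℂ) := {X | T X = X}

/-- The support of an operator: the orthogonal complement of its kernel,
equivalently the range of its adjoint. -/
noncomputable def msupp (A : Matrix ι ι ℂ) : Submodule ℂ (ι → ℂ) := LinearMap.range (Aᴴ).mulVecLin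

/-- The support of a set of operators: the span of the union of their supports. -/
noncomputable def suppSet (W : Set (Matrix ι ι ℂ)) : Submodule ℂ (ι → ℂ) := ⨆ O ∈ W, msupp O

/-- The minimal modular-invariant distorted algebra generated by `W` relative to `ρ`:
the smallest subspace containing `W` that is closed under the adjoint, under the
`ρ`-modified product `(X,Y) ↦ X ρ⁻ Y`, and under the modular map `X ↦ ρ^{1/2} X ρ⁻^{1/2}`. -/
noncomputable def Fdist (ρ : Matrix ι ι ℂ) (W : Set (Matrix ι ι ℂ)) :
    Submodule ℂ (Matrix ι ι ℂ) :=
  sInf {S : Submodule ℂ (Matrix ι ι ℂ) | W ⊆ S ∧ (∀ X ∈ S, Xᴴ ∈ S) ∧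
    (∀ X ∈ S, ∀ Y ∈ S, X * mpinv ρ * Y ∈ S) ∧
    (∀ X ∈ S, msqrt ρ * X * mpinv (msqrt ρ) ∈ S)}

/-- `ρ` is globally asymptotically stable for the generator `L`: it is invariant and every
solution of `ẋ = L(x)` starting at a density operator converges to `ρ` as `t → ∞`. -/
def IsGAS (L : Matrix ι ι ℂ →ₗ[ℂ] Matrix ι ι ℂ) (ρ : Matrix ι ι ℂ) : Prop :=
  L ρ = 0 ∧
  ∀ σ : Matrix ι ι ℂ, IsDensity σ →
    ∀ x : ℝ → Matrix ι ι ℂ, x 0 = σ →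
      (∀ t : ℝ, ∀ i j, HasDerivAt (fun s : ℝ => x s i j) (L (x t) i j) t) →
      ∀ i j, Filter.Tendsto (fun t : ℝ => x t i j) Filter.atTop (nhds (ρ i j))

end Single

/-! ### Bipartite notions -/

section Bipartite

variable {α β : Type*} [Fintype α] [Fintype β] [DecidableEq α] [DecidableEq β]

/-- Partial trace over the second factor. -/
noncomputable def ptraceB (ρ : Matrix (α × β) (α × β) ℂ) : Matrix α α ℂ :=
  Matrix.of fun i j => ∑ k : β, ρ (i, k) (j, k)

/-- The operator Schmidt span of `ρ` on the first factor:
`{Tr_B[(I ⊗ B) ρ] : B ∈ B(H_B)}`. -/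
noncomputable def opSchmidtA (ρ : Matrix (α × β) (α × β) ℂ) : Set (Matrix α α ℂ) :=
  {A | ∃ B : Matrix β β ℂ,
    A = ptraceB ((Matrix.kroneckerMap (· * ·) (1 : Matrix α α ℂ) B) * ρ)}

/-- The (vector) Schmidt span of `v ∈ V_A ⊗ V_B` relative to `V_A`: the image of `v`
under partial inner products with vectors of `V_B`. -/
def vSchmidtA (v : α × β → ℂ) : Set (α → ℂ) :=
  {w | ∃ b : β → ℂ, w = fun a => ∑ j, (starRingEnd ℂ) (b j) * v (a, j)}

/-- `Σ_A(v) ⊗ V_B` as a subspace of `V_A ⊗ V_B`. -/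
noncomputable def extVSchmidtA (v : α × β → ℂ) : Submodule ℂ (α × β → ℂ) :=
  Submodule.span ℂ {v' | ∃ w ∈ vSchmidtA v, ∃ b : β → ℂ, v' = fun p => w p.1 * b p.2}

end Bipartite

/-! ### Multipartite notions -/

section Multipartite

variable {n : ℕ} {d : Fin n → Type*} [∀ a, Fintype (d a)] [∀ a, DecidableEq (d a)]

/-- Index type of the neighborhood factor `H_N`. -/
abbrev nbhdIdx (d : Fin n → Type*) (N : Finset (Fin n)) : Type _ :=
  ∀ a : {x : Fin n // x ∈ N}, d a

/-- Index type of the complementary factor `H_N̄`. -/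
abbrev nbhdCoIdx (d : Fin n → Type*) (N : Finset (Fin n)) : Type _ :=
  ∀ a : {x : Fin n // ¬ x ∈ N}, d a

/-- The factorization `H ≃ H_N ⊗ H_N̄` at the level of index types. -/
def splitEquiv (d : Fin n → Type*) (N : Finset (Fin n)) :
    (∀ a, d a) ≃ nbhdIdx d N × nbhdCoIdx d N :=
  Equiv.piEquivPiSubtypeProd (fun x => x ∈ N) d

variable (d)

/-- The operator `A ⊗ B` on `H = H_N ⊗ H_N̄`, viewed as an operator on `H`. -/
noncomputable def splitLift (N : Finset (Fin n))
    (A : Matrix (nbhdIdx d N) (nbhdIdx d N) ℂ)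
    (B : Matrix (nbhdCoIdx d N) (nbhdCoIdx d N) ℂ) :
    Matrix (∀ a, d a) (∀ a, d a) ℂ :=
  (Matrix.kroneckerMap (· * ·) A B).submatrix (splitEquiv d N) (splitEquiv d N)

/-- The neighborhood operator `A ⊗ I_N̄` on `H`. -/
noncomputable def nbhdLift (N : Finset (Fin n))
    (A : Matrix (nbhdIdx d N) (nbhdIdx d N) ℂ) : Matrix (∀ a, d a) (∀ a, d a) ℂ :=
  splitLift d N A 1

/-- The operator `I_N ⊗ B` on `H`. -/
noncomputable def coLift (N : Finset (Fin n))
    (B : Matrix (nbhdCoIdx d N) (nbhdCoIdx d N) ℂ) : Matrix (∀ a, d a) (∀ a, d a) ℂ :=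
  splitLift d N 1 B

/-- The reduced state `ρ_N = Tr_N̄(ρ)` on the neighborhood `N`. -/
noncomputable def nbhdPtrace (N : Finset (Fin n)) (ρ : Matrix (∀ a, d a) (∀ a, d a) ℂ) :
    Matrix (nbhdIdx d N) (nbhdIdx d N) ℂ :=
  Matrix.of fun i j => ∑ k : nbhdCoIdx d N,
    ρ ((splitEquiv d N).symm (i, k)) ((splitEquiv d N).symm (j, k))

/-- The operator Schmidt span of `ρ` on the neighborhood `N`:
`Σ_N(ρ) = {Tr_N̄[(I_N ⊗ B) ρ] : B}`. -/
noncomputable def nbhdSchmidt (N : Finset (Fin n)) (ρ : Matrix (∀ a, d a) (∀ a, d a) ℂ) :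
    Set (Matrix (nbhdIdx d N) (nbhdIdx d N) ℂ) :=
  {A | ∃ B : Matrix (nbhdCoIdx d N) (nbhdCoIdx d N) ℂ,
    A = nbhdPtrace d N (coLift d N B * ρ)}

/-- The extended minimal modular-invariant distorted algebra
`F_{ρ_N}(Σ_N(ρ)) ⊗ B(H_N̄)` as a subspace of `B(H)`. -/
noncomputable def extF (N : Finset (Fin n)) (ρ : Matrix (∀ a, d a) (∀ a, d a) ℂ) :
    Submodule ℂ (Matrix (∀ a, d a) (∀ a, d a) ℂ) :=
  Submodule.span ℂ {X | ∃ A ∈ Fdist (nbhdPtrace d N ρ) (nbhdSchmidt d N ρ),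
    ∃ B : Matrix (nbhdCoIdx d N) (nbhdCoIdx d N) ℂ, X = splitLift d N A B}

/-- A neighborhood QDS generator for `N`: a Lindblad generator whose Hamiltonian and
noise operators all act as `X_N ⊗ I_N̄`. -/
def IsNbhdGen (N : Finset (Fin n))
    (L : Matrix (∀ a, d a) (∀ a, d a) ℂ →ₗ[ℂ] Matrix (∀ a, d a) (∀ a, d a) ℂ) : Prop :=
  ∃ HN : Matrix (nbhdIdx d N) (nbhdIdx d N) ℂ, HN.IsHermitian ∧
    ∃ (m : ℕ) (Lk : Fin m → Matrix (nbhdIdx d N) (nbhdIdx d N) ℂ),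
      L = lindbladMap (nbhdLift d N HN) fun k => nbhdLift d N (Lk k)

/-- A purely dissipative neighborhood generator for `N` (zero Hamiltonian in some
Lindblad representation). -/
def IsDissipNbhdGen (N : Finset (Fin n))
    (L : Matrix (∀ a, d a) (∀ a, d a) ℂ →ₗ[ℂ] Matrix (∀ a, d a) (∀ a, d a) ℂ) : Prop :=
  ∃ (m : ℕ) (Lk : Fin m → Matrix (nbhdIdx d N) (nbhdIdx d N) ℂ),
    L = lindbladMap 0 fun k => nbhdLift d N (Lk k)

/-- The family of neighborhood generators `Lj` is frustration free: every invariant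
state of the sum is invariant for each component. -/
def IsFFFamily {M : ℕ}
    (Lj : Fin M → (Matrix (∀ a, d a) (∀ a, d a) ℂ →ₗ[ℂ] Matrix (∀ a, d a) (∀ a, d a) ℂ)) :
    Prop :=
  ∀ ρ : Matrix (∀ a, d a) (∀ a, d a) ℂ, IsDensity ρ → (∑ j, Lj j) ρ = 0 → ∀ j, Lj j ρ = 0

/-- `ρ` is frustration-free quasi-locally stabilizable relative to the neighborhood
structure `Nb`. -/
def IsFFQLS {M : ℕ} (Nb : Fin M → Finset (Fin n))
    (ρ : Matrix (∀ a, d a) (∀ a, d a) ℂ) : Prop :=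
  ∃ Lj : Fin M → (Matrix (∀ a, d a) (∀ a, d a) ℂ →ₗ[ℂ] Matrix (∀ a, d a) (∀ a, d a) ℂ),
    (∀ j, IsNbhdGen d (Nb j) (Lj j)) ∧ IsFFFamily d Lj ∧ IsGAS (∑ j, Lj j) ρ

/-- A pure state `|ψ⟩⟨ψ|` is dissipatively quasi-locally stabilizable relative to `Nb`:
it is GAS for a QL generator whose components have zero Hamiltonian and neighborhood
noise operators annihilating `ψ`. -/
def IsDQLS {M : ℕ} (Nb : Fin M → Finset (Fin n)) (ψ : (∀ a, d a) → ℂ) : Prop :=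
  ∃ Lj : Fin M → (Matrix (∀ a, d a) (∀ a, d a) ℂ →ₗ[ℂ] Matrix (∀ a, d a) (∀ a, d a) ℂ),
    (∀ j, ∃ (m : ℕ) (Dk : Fin m → Matrix (nbhdIdx d (Nb j)) (nbhdIdx d (Nb j)) ℂ),
      Lj j = lindbladMap 0 (fun k => nbhdLift d (Nb j) (Dk k)) ∧
      ∀ k, (nbhdLift d (Nb j) (Dk k)).mulVec ψ = 0) ∧
    IsGAS (∑ j, Lj j) (Matrix.vecMulVec ψ (star ψ))

/-- The (vector) Schmidt span of `ψ` relative to the neighborhood factor `H_N`. -/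
def vecSchmidt (N : Finset (Fin n)) (ψ : (∀ a, d a) → ℂ) : Set (nbhdIdx d N → ℂ) :=
  {w | ∃ b : nbhdCoIdx d N → ℂ,
    w = fun i => ∑ k, (starRingEnd ℂ) (b k) * ψ ((splitEquiv d N).symm (i, k))}

/-- `Σ_N(ψ) ⊗ H_N̄` as a subspace of `H`. -/
noncomputable def extVecSchmidt (N : Finset (Fin n)) (ψ : (∀ a, d a) → ℂ) :
    Submodule ℂ ((∀ a, d a) → ℂ) :=
  Submodule.span ℂ {v | ∃ w ∈ vecSchmidt d N ψ, ∃ b : nbhdCoIdx d N → ℂ,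
    v = fun x => w ((splitEquiv d N) x).1 * b ((splitEquiv d N) x).2}

end Multipartite

/-!
Write the generator as `ℒ X = G X + X G† + ∑ₖ Lₖ X Lₖ†` with `G + G† = -∑ₖ Lₖ†Lₖ`, and let `σ ≥ 0`
be stationary. If `ℒ (X σ) = 0`, then the carré du champ identity
`∑ₖ [Lₖ, X] σ [Lₖ, X]† = ℒ (X σ X†) - ℒ (X σ) X† - X ℒ (σ X†) + X ℒ(σ) X†` and trace preservation
give `[Lₖ, X] σ = 0`, hence also `[G, X] σ = 0`. Conversely, such an `X` satisfies
`ℒ (X σ Z) = X ℒ (σ Z)` for all `Z`, and `X†` is again of this kind when `X` vanishes on the kernel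
of `σ`. Therefore the stationary operators on the range of `σ` are closed under the adjoint, under
`(X, Y) ↦ X σ⁻ Y` and under `X ↦ σ X σ⁻`. The map `X ↦ σ^{1/2} X σ^{-1/2}` is a polynomial in the
latter, so it preserves them as well, and `F_σ(W)` consists of such operators as soon as `W` does.
For `σ = Tr_B ρ` this applies to the Schmidt span, because `X ↦ Tr_B[(1 ⊗ B) X]` intertwines
`ℒ ⊗ id` with `ℒ` and `ρ` is supported on the range of `σ ⊗ 1`.
-/

section FunctionalCalculus

variable {ι : Type*} [Fintype ι]

theorem mpinv_eq_of_penrose {A B : Matrix ι ι ℂ} (hABA : A * B * A = A) (hBAB : B * A * B = B)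
    (hAB : (A * B).IsHermitian) (hBA : (B * A).IsHermitian) : mpinv A = B := by
  have hex : ∃ B : Matrix ι ι ℂ,
      A * B * A = A ∧ B * A * B = B ∧ (A * B)ᴴ = A * B ∧ (B * A)ᴴ = B * A :=
    ⟨B, hABA, hBAB, hAB, hBA⟩
  rw [mpinv, dif_pos hex]
  obtain ⟨hACA, hCAC, hAC, hCA⟩ := hex.choose_spec
  generalize hex.choose = C at *
  have hleft : A * C = A * B := calc
    A * C = (A * B * (A * C))ᴴ := by rw [← mul_assoc, hABA, hAC]
    _ = A * C * A * B := by rw [conjTranspose_mul, hAC, hAB.eq, ← mul_assoc]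
    _ = A * B := by rw [hACA]
  have hright : C * A = B * A := calc
    C * A = (C * A * (B * A))ᴴ := by rw [mul_assoc, ← mul_assoc A, hABA, hCA]
    _ = B * (A * C * A) := by rw [conjTranspose_mul, hCA, hBA.eq, mul_assoc, ← mul_assoc A]
    _ = B * A := by rw [hACA]
  rw [← hCAC, hright, mul_assoc, hleft, ← mul_assoc, hBAB]

variable [DecidableEq ι]

theorem cfc_mul_cfc (f g : ℝ → ℝ) (A : Matrix ι ι ℂ) :
    cfc f A * cfc g A = cfc (fun x => f x * g x) A :=
  (cfc_mul f g A (A.finite_real_spectrum.continuousOn f)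
    (A.finite_real_spectrum.continuousOn g)).symm

theorem mpinv_cfc (f : ℝ → ℝ) (A : Matrix ι ι ℂ) :
    mpinv (cfc f A) = cfc (fun x => (f x)⁻¹) A := by
  apply mpinv_eq_of_penrose
  · simp only [cfc_mul_cfc, mul_inv_mul_cancel]
  · simp only [cfc_mul_cfc]
    exact congrArg (cfc · A) (funext fun x => by simpa using mul_inv_mul_cancel (f x)⁻¹)
  all_goals rw [cfc_mul_cfc]; exact cfc_predicate _ A

theorem mpinv_eq_cfc {A : Matrix ι ι ℂ} (hA : A.IsHermitian) :
    mpinv A = cfc (fun x : ℝ => x⁻¹) A := by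
  conv_lhs => rw [← cfc_id ℝ A hA]
  exact mpinv_cfc id A

open scoped MatrixOrder in
theorem msqrt_eq_cfc {A : Matrix ι ι ℂ} (hA : A.PosSemidef) : msqrt A = cfc Real.sqrt A := by
  have hsq : cfc Real.sqrt A * cfc Real.sqrt A = A := by
    rw [cfc_mul_cfc]
    conv_rhs => rw [← cfc_id' ℝ A hA.1]
    exact cfc_congr fun x hx => Real.mul_self_sqrt (spectrum_nonneg_of_nonneg hA.nonneg hx)
  have hex : ∃ B : Matrix ι ι ℂ, B.PosSemidef ∧ B * B = A :=
    ⟨_, (cfc_nonneg fun x _ => Real.sqrt_nonneg x).posSemidef, hsq⟩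
  rw [msqrt, dif_pos hex, ← CFC.sqrt_unique hex.choose_spec.2 hex.choose_spec.1.nonneg]
  exact CFC.sqrt_unique hsq (cfc_nonneg fun x _ => Real.sqrt_nonneg x)

theorem mpinv_msqrt_eq_cfc {A : Matrix ι ι ℂ} (hA : A.PosSemidef) :
    mpinv (msqrt A) = cfc (fun x => (√x)⁻¹) A := by
  rw [msqrt_eq_cfc hA, mpinv_cfc]

theorem exists_aeval_eq_of_basis {K V κ : Type*} [Field K] [AddCommGroup V] [Module K V]
    [Finite κ] (b : Module.Basis κ K V) {S T : Module.End K V} (μ : κ → K) (φ : K → K)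
    (hT : ∀ i, T (b i) = μ i • b i) (hS : ∀ i, S (b i) = φ (μ i) • b i) :
    ∃ p : Polynomial K, Polynomial.aeval T p = S := by
  classical
  have := Fintype.ofFinite κ
  let p := Lagrange.interpolate (Finset.univ.image μ) id φ
  refine ⟨p, b.ext fun i => ?_⟩
  have hp : p.eval (μ i) = φ (μ i) :=
    Lagrange.eval_interpolate_at_node φ Function.injective_id.injOn
      (Finset.mem_image_of_mem μ (Finset.mem_univ i))
  rw [Module.End.aeval_apply_of_mem_apply_eq_smul (hT i), hp, hS]

/-- The two-sided multiplication `X ↦ f(A) X g(A)`. For `f = id` and `g = (·)⁻¹` it is the modular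
operator of `A`, for `f = √` and `g = (√·)⁻¹` its half power. -/
noncomputable def cfcMulCfc (f g : ℝ → ℝ) (A : Matrix ι ι ℂ) : Module.End ℂ (Matrix ι ι ℂ) :=
  LinearMap.mulLeft ℂ (cfc f A) ∘ₗ LinearMap.mulRight ℂ (cfc g A)

theorem exists_basis_cfcMulCfc_eq_smul {A : Matrix ι ι ℂ} (hA : A.IsHermitian) :
    ∃ b : Module.Basis (ι × ι) ℂ (Matrix ι ι ℂ), ∀ (f g : ℝ → ℝ) (p : ι × ι),
      cfcMulCfc f g A (b p) =
        ((f (hA.eigenvalues p.1) * g (hA.eigenvalues p.2) : ℝ) : ℂ) • b p := by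
  let conj := Unitary.conjStarAlgAut ℂ (Matrix ι ι ℂ) hA.eigenvectorUnitary
  refine ⟨(Matrix.stdBasis ℂ ι ι).map conj.toAlgEquiv.toLinearEquiv, fun f g ⟨i, j⟩ => ?_⟩
  have hcfc (h : ℝ → ℝ) : cfc h A = conj (diagonal fun k => (h (hA.eigenvalues k) : ℂ)) :=
    hA.cfc_eq h
  change cfc f A * (conj (Matrix.stdBasis ℂ ι ι (i, j)) * cfc g A) = _ • conj _
  rw [hcfc, hcfc, ← map_mul, ← map_mul, ← map_smul]
  congr 1
  ext k l
  by_cases h : i = k ∧ j = l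
  · obtain ⟨rfl, rfl⟩ := h
    simp [Matrix.stdBasis_eq_single]
  · simp [Matrix.stdBasis_eq_single, h]

/-- The half power is a polynomial in the modular operator: the eigenvalues of the latter are the
quotients `x * y⁻¹` of eigenvalues of `A`, and `√(x * y⁻¹) = √x * (√y)⁻¹`. -/
theorem cfcMulCfc_sqrt_mem {A : Matrix ι ι ℂ} (hA : A.PosSemidef) {K : Submodule ℂ (Matrix ι ι ℂ)}
    (hK : K ∈ (cfcMulCfc (fun x => x) (fun x => x⁻¹) A).invtSubmodule) {X : Matrix ι ι ℂ}
    (hX : X ∈ K) : cfcMulCfc Real.sqrt (fun x => (√x)⁻¹) A X ∈ K := by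
  obtain ⟨b, hb⟩ := exists_basis_cfcMulCfc_eq_smul hA.1
  obtain ⟨p, hp⟩ := exists_aeval_eq_of_basis b _ (fun z => ((√z.re : ℝ) : ℂ))
    (hb (fun x => x) (fun x => x⁻¹)) (S := cfcMulCfc Real.sqrt (fun x => (√x)⁻¹) A) fun i => by
      rw [hb, Complex.ofReal_re, Real.sqrt_mul (hA.eigenvalues_nonneg _), Real.sqrt_inv]
  exact hp ▸ Polynomial.aeval_apply_smul_mem_of_le_comap hX p _ hK

end FunctionalCalculus

section SupportProjection

variable {ι : Type*} [Fintype ι] {A : Matrix ι ι ℂ}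

open scoped MatrixOrder in
theorem mul_eq_zero_of_trace_mul_mul_conjTranspose_eq_zero {κ : Type*} [Fintype κ]
    (hA : A.PosSemidef) {M : Matrix κ ι ℂ} (h : (M * A * Mᴴ).trace = 0) :
    M * A = 0 := by
  classical
  obtain ⟨R, rfl⟩ := CStarAlgebra.nonneg_iff_eq_star_mul_self.1 hA.nonneg
  have hMR : M * Rᴴ = 0 := by
    rw [← trace_mul_conjTranspose_self_eq_zero_iff, conjTranspose_mul, conjTranspose_conjTranspose]
    simpa only [star_eq_conjTranspose, Matrix.mul_assoc] using h
  rw [star_eq_conjTranspose, ← Matrix.mul_assoc, hMR, Matrix.zero_mul]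

theorem msqrt_mul_mul_mpinv_msqrt_mem (hA : A.PosSemidef) {K : Submodule ℂ (Matrix ι ι ℂ)}
    (hK : ∀ X ∈ K, A * X * mpinv A ∈ K) {X : Matrix ι ι ℂ} (hX : X ∈ K) :
    msqrt A * X * mpinv (msqrt A) ∈ K := by
  classical
  have hid : cfc (fun x : ℝ => x) A = A := cfc_id' ℝ A hA.1
  have hinv : K ∈ (cfcMulCfc (fun x => x) (fun x => x⁻¹) A).invtSubmodule := fun Y hY => by
    change cfc _ A * (Y * cfc _ A) ∈ K
    rw [hid, ← mpinv_eq_cfc hA.1, ← mul_assoc]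
    exact hK Y hY
  rw [mpinv_msqrt_eq_cfc hA, msqrt_eq_cfc hA, mul_assoc]
  exact cfcMulCfc_sqrt_mem hA hinv hX

theorem isHermitian_mpinv (hA : A.IsHermitian) : (mpinv A).IsHermitian := by
  classical
  rw [mpinv_eq_cfc hA]
  exact cfc_predicate (R := ℝ) _ A

theorem commute_mpinv (hA : A.IsHermitian) : Commute A (mpinv A) := by
  classical
  have hid : cfc (fun x : ℝ => x) A = A := cfc_id' ℝ A hA
  have hcomm := cfc_commute_cfc (fun x : ℝ => x) (fun x : ℝ => x⁻¹) A
  rwa [← mpinv_eq_cfc hA, hid] at hcomm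

theorem mul_mpinv_mul_self (hA : A.IsHermitian) : A * mpinv A * A = A := by
  classical
  have hid : cfc (fun x : ℝ => x) A = A := cfc_id' ℝ A hA
  calc A * mpinv A * A = cfc (fun x : ℝ => x * x⁻¹ * x) A := by
        rw [← cfc_mul_cfc, ← cfc_mul_cfc, ← mpinv_eq_cfc hA, hid]
    _ = A := by simp only [mul_inv_mul_cancel, hid]

theorem mpinv_mul_mul_mpinv (hA : A.IsHermitian) : mpinv A * A * mpinv A = mpinv A := by
  classical
  have hid : cfc (fun x : ℝ => x) A = A := cfc_id' ℝ A hA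
  calc mpinv A * A * mpinv A = cfc (fun x : ℝ => x⁻¹ * x * x⁻¹) A := by
        rw [← cfc_mul_cfc, ← cfc_mul_cfc, ← mpinv_eq_cfc hA, hid]
    _ = mpinv A := by
        rw [mpinv_eq_cfc hA]
        exact congrArg (cfc · A) (funext fun x => by simpa using mul_inv_mul_cancel x⁻¹)

/-- The orthogonal projection onto the range of a Hermitian matrix. -/
noncomputable def supportProj (A : Matrix ι ι ℂ) : Matrix ι ι ℂ := A * mpinv A

theorem mpinv_mul_self (hA : A.IsHermitian) : mpinv A * A = supportProj A :=
  (commute_mpinv hA).eq.symm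

theorem supportProj_mul_self (hA : A.IsHermitian) : supportProj A * A = A :=
  mul_mpinv_mul_self hA

theorem mpinv_mul_supportProj (hA : A.IsHermitian) : mpinv A * supportProj A = mpinv A := by
  rw [supportProj, ← mul_assoc, mpinv_mul_mul_mpinv hA]

theorem isHermitian_supportProj (hA : A.IsHermitian) : (supportProj A).IsHermitian := by
  rw [IsHermitian, supportProj, conjTranspose_mul, hA.eq, (isHermitian_mpinv hA).eq,
    mpinv_mul_self hA, supportProj]

theorem mul_mpinv_mul_conjTranspose_mul (hA : A.IsHermitian) {X : Matrix ι ι ℂ}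
    (hX : X * supportProj A = X) : A * (mpinv A * (Xᴴ * A)) = Xᴴ * A := by
  rw [← mul_assoc, ← supportProj, ← mul_assoc, ← (isHermitian_supportProj hA).eq,
    ← conjTranspose_mul, hX]

theorem conjTranspose_mul_conjTranspose_eq_supportProj_mul (hA : A.IsHermitian)
    {X Y : Matrix ι ι ℂ} (hX : X * supportProj A = X) (hcomm : Y * X * A = X * Y * A) :
    Xᴴ * Yᴴ = supportProj A * Yᴴ * Xᴴ := by
  have hYX : Y * X = X * Y * supportProj A := calc
    Y * X = Y * X * A * mpinv A := by rw [mul_assoc _ A, ← supportProj, mul_assoc, hX]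
    _ = X * Y * supportProj A := by rw [hcomm, mul_assoc _ A, ← supportProj]
  rw [← conjTranspose_mul, hYX, conjTranspose_mul, conjTranspose_mul,
    (isHermitian_supportProj hA).eq, mul_assoc]

end SupportProjection

section Lindblad

variable {ι : Type*} [Fintype ι] {m : ℕ}

/-- The effective drift `-iH - ½ ∑ₖ Lₖ†Lₖ` of a Lindblad generator: for Hermitian `H` the generator
takes the form `X ↦ G X + X G† + ∑ₖ Lₖ X Lₖ†`. -/
noncomputable def lindbladDrift (H : Matrix ι ι ℂ) (L : Fin m → Matrix ι ι ℂ) : Matrix ι ι ℂ :=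
  -Complex.I • H - (1 / 2 : ℂ) • ∑ k, (L k)ᴴ * L k

variable {H : Matrix ι ι ℂ} {L : Fin m → Matrix ι ι ℂ}

theorem lindbladDrift_add_conjTranspose (hH : H.IsHermitian) :
    lindbladDrift H L + (lindbladDrift H L)ᴴ = -∑ k, (L k)ᴴ * L k := by
  have hI : star Complex.I = -Complex.I := Complex.conj_I
  have hhalf : star (1 / 2 : ℂ) = 1 / 2 := by simp
  simp only [lindbladDrift, conjTranspose_sub, conjTranspose_smul, conjTranspose_sum,
    conjTranspose_mul, conjTranspose_conjTranspose, hH.eq, star_neg, hI, hhalf]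
  module

theorem conjTranspose_lindbladDrift (hH : H.IsHermitian) :
    (lindbladDrift H L)ᴴ = -lindbladDrift H L - ∑ k, (L k)ᴴ * L k := by
  rw [sub_eq_add_neg, ← lindbladDrift_add_conjTranspose hH, neg_add_cancel_left]

variable [DecidableEq ι]

theorem lindbladMap_apply (hH : H.IsHermitian) (X : Matrix ι ι ℂ) :
    lindbladMap H L X =
      lindbladDrift H L * X + X * (lindbladDrift H L)ᴴ + ∑ k, L k * X * (L k)ᴴ := by
  rw [conjTranspose_lindbladDrift hH]
  simp only [lindbladMap, lindbladDrift, LinearMap.add_apply, LinearMap.smul_apply,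
    LinearMap.sub_apply, LinearMap.sum_apply, LinearMap.comp_apply, LinearMap.mulLeft_apply,
    LinearMap.mulRight_apply, Finset.sum_sub_distrib, ← Finset.smul_sum, Finset.sum_add_distrib,
    sub_mul, mul_sub, mul_neg, smul_mul_assoc, mul_smul_comm, ← Finset.sum_mul, ← Finset.mul_sum]
  module

theorem lindbladMap_conjTranspose (hH : H.IsHermitian) (X : Matrix ι ι ℂ) :
    lindbladMap H L Xᴴ = (lindbladMap H L X)ᴴ := by
  simp only [lindbladMap_apply hH, conjTranspose_add, conjTranspose_mul, conjTranspose_sum,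
    conjTranspose_conjTranspose, mul_assoc]
  abel

theorem trace_lindbladMap (hH : H.IsHermitian) (X : Matrix ι ι ℂ) :
    (lindbladMap H L X).trace = 0 := by
  have hnoise : (∑ k, L k * X * (L k)ᴴ).trace = ((∑ k, (L k)ᴴ * L k) * X).trace := by
    simp only [Finset.sum_mul, trace_sum, trace_mul_cycle _ X]
  rw [lindbladMap_apply hH, trace_add, trace_add, trace_mul_comm X, ← trace_add, ← add_mul, hnoise,
    ← trace_add, ← add_mul, lindbladDrift_add_conjTranspose hH, neg_add_cancel, zero_mul,
    trace_zero]

theorem sum_commutator_mul_mul_commutator (hH : H.IsHermitian) (σ Y : Matrix ι ι ℂ) :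
    ∑ k, (L k * Y - Y * L k) * σ * (L k * Y - Y * L k)ᴴ =
      lindbladMap H L (Y * σ * Yᴴ) - lindbladMap H L (Y * σ) * Yᴴ - Y * lindbladMap H L (σ * Yᴴ) +
        Y * lindbladMap H L σ * Yᴴ := by
  simp only [lindbladMap_apply hH, conjTranspose_sub, conjTranspose_mul, sub_mul, mul_sub,
    Finset.sum_sub_distrib, mul_add, add_mul, Finset.sum_mul, Finset.mul_sum, mul_assoc]
  abel

/-- Under the trace, `sum_commutator_mul_mul_commutator` leaves a vanishing sum of nonnegative
terms. -/
theorem noise_mul_mul_eq_of_trace_eq_zero (hH : H.IsHermitian) {σ Y : Matrix ι ι ℂ}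
    (hσ : σ.PosSemidef) (hfix : lindbladMap H L σ = 0)
    (htr : (lindbladMap H L (Y * σ) * Yᴴ).trace = 0) (k : Fin m) :
    L k * Y * σ = Y * L k * σ := by
  have htr' : (Y * lindbladMap H L (σ * Yᴴ)).trace = 0 := by
    have hadj : (Y * lindbladMap H L (σ * Yᴴ)).trace =
        star (lindbladMap H L (Y * σ) * Yᴴ).trace := by
      rw [← trace_conjTranspose, conjTranspose_mul, conjTranspose_conjTranspose,
        ← lindbladMap_conjTranspose hH, conjTranspose_mul, hσ.1.eq]
    rw [hadj, htr, star_zero]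
  have hsum : ∑ k, ((L k * Y - Y * L k) * σ * (L k * Y - Y * L k)ᴴ).trace = 0 := by
    rw [← trace_sum, sum_commutator_mul_mul_commutator hH, hfix, trace_add, trace_sub, trace_sub,
      trace_lindbladMap hH, htr, htr', mul_zero, zero_mul, trace_zero]
    simp
  have hk := (Finset.sum_eq_zero_iff_of_nonneg fun k _ =>
    (hσ.mul_mul_conjTranspose_same _).trace_nonneg).1 hsum k (Finset.mem_univ k)
  rw [← sub_eq_zero, ← sub_mul]
  exact mul_eq_zero_of_trace_mul_mul_conjTranspose_eq_zero hσ hk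

/-- The operator `X` commutes with the noise operators and with the drift on the range of `σ`. For
stationary `σ` this describes the `X` with `X σ` stationary. -/
structure CommutesOnRange (H : Matrix ι ι ℂ) (L : Fin m → Matrix ι ι ℂ) (σ X : Matrix ι ι ℂ) :
    Prop where
  noise : ∀ k, L k * X * σ = X * L k * σ
  drift : lindbladDrift H L * X * σ = X * lindbladDrift H L * σ

theorem CommutesOnRange.lindbladMap_mul {σ X : Matrix ι ι ℂ} (hX : CommutesOnRange H L σ X)
    (hH : H.IsHermitian) (Z : Matrix ι ι ℂ) :
    lindbladMap H L (X * (σ * Z)) = X * lindbladMap H L (σ * Z) := by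
  have hdrift : lindbladDrift H L * (X * (σ * Z)) = X * (lindbladDrift H L * (σ * Z)) := by
    simpa only [mul_assoc] using congrArg (· * Z) hX.drift
  have hnoise (k : Fin m) : L k * (X * (σ * Z)) = X * (L k * (σ * Z)) := by
    simpa only [mul_assoc] using congrArg (· * Z) (hX.noise k)
  simp only [lindbladMap_apply hH, hdrift, hnoise, mul_add, Finset.mul_sum, mul_assoc]

theorem commutesOnRange_iff (hH : H.IsHermitian) {σ X : Matrix ι ι ℂ} (hσ : σ.PosSemidef)
    (hfix : lindbladMap H L σ = 0) :
    CommutesOnRange H L σ X ↔ lindbladMap H L (X * σ) = 0 := by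
  refine ⟨fun hX => by simpa [hfix] using hX.lindbladMap_mul hH 1, fun hXσ => ?_⟩
  have hnoise : ∀ k, L k * X * σ = X * L k * σ :=
    noise_mul_mul_eq_of_trace_eq_zero hH hσ hfix (by rw [hXσ, zero_mul, trace_zero])
  have hdiff : lindbladMap H L (X * σ) - X * lindbladMap H L σ =
      lindbladDrift H L * X * σ - X * lindbladDrift H L * σ := by
    simp only [lindbladMap_apply hH, ← mul_assoc, hnoise, mul_add, Finset.mul_sum]
    abel
  refine ⟨hnoise, ?_⟩
  rwa [hXσ, hfix, mul_zero, sub_zero, eq_comm, sub_eq_zero] at hdiff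

end Lindblad

section StationaryCorner

variable {ι : Type*} [Fintype ι] [DecidableEq ι] {m : ℕ} {H : Matrix ι ι ℂ}
  {L : Fin m → Matrix ι ι ℂ} {σ : Matrix ι ι ℂ}

theorem commutesOnRange_supportProj (hH : H.IsHermitian) (hσ : σ.PosSemidef)
    (hfix : lindbladMap H L σ = 0) : CommutesOnRange H L σ (supportProj σ) := by
  rw [commutesOnRange_iff hH hσ hfix, supportProj_mul_self hσ.1, hfix]

theorem CommutesOnRange.noise_conjTranspose (hH : H.IsHermitian) (hσ : σ.PosSemidef)
    (hfix : lindbladMap H L σ = 0) {X : Matrix ι ι ℂ} (hX : CommutesOnRange H L σ X)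
    (hXP : X * supportProj σ = X) (k : Fin m) : L k * Xᴴ * σ = Xᴴ * L k * σ := by
  refine noise_mul_mul_eq_of_trace_eq_zero hH hσ hfix ?_ k
  calc (lindbladMap H L (Xᴴ * σ) * Xᴴᴴ).trace
      = (X * lindbladMap H L (σ * (mpinv σ * (Xᴴ * σ)))).trace := by
        rw [conjTranspose_conjTranspose, trace_mul_comm, mul_mpinv_mul_conjTranspose_mul hσ.1 hXP]
    _ = (lindbladMap H L (X * (σ * (mpinv σ * (Xᴴ * σ))))).trace := by
        rw [hX.lindbladMap_mul hH]
    _ = 0 := trace_lindbladMap hH _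

/-- The drift is controlled through `G = -G† - ∑ₖ Lₖ†Lₖ`, compressed to the range of `σ`, which `G`
leaves invariant. -/
theorem CommutesOnRange.conjTranspose (hH : H.IsHermitian) (hσ : σ.PosSemidef)
    (hfix : lindbladMap H L σ = 0) {X : Matrix ι ι ℂ} (hX : CommutesOnRange H L σ X)
    (hXP : X * supportProj σ = X) : CommutesOnRange H L σ Xᴴ := by
  have hnoise := hX.noise_conjTranspose hH hσ hfix hXP
  set P := supportProj σ
  set G := lindbladDrift H L
  have hnoise_sq (k : Fin m) : P * ((L k)ᴴ * L k * Xᴴ * σ) = Xᴴ * ((L k)ᴴ * L k) * σ := calc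
    P * ((L k)ᴴ * L k * Xᴴ * σ) = P * (L k)ᴴ * (L k * Xᴴ * σ) := by simp only [mul_assoc]
    _ = P * (L k)ᴴ * Xᴴ * (L k * σ) := by rw [hnoise, mul_assoc Xᴴ, ← mul_assoc _ Xᴴ]
    _ = Xᴴ * ((L k)ᴴ * L k) * σ := by
      rw [← conjTranspose_mul_conjTranspose_eq_supportProj_mul hσ.1 hXP (hX.noise k)]
      simp only [mul_assoc]
  have hdrift : Xᴴ * Gᴴ = P * Gᴴ * Xᴴ :=
    conjTranspose_mul_conjTranspose_eq_supportProj_mul hσ.1 hXP hX.drift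
  have hGσ : P * G * σ = G * σ := by
    rw [← (commutesOnRange_supportProj hH hσ hfix).drift, mul_assoc, supportProj_mul_self hσ.1]
  have hrange (Z : Matrix ι ι ℂ) : P * (G * (σ * Z)) = G * (σ * Z) := by
    simpa only [mul_assoc] using congrArg (· * Z) hGσ
  have hG : G = -Gᴴ - ∑ k, (L k)ᴴ * L k := by
    rw [conjTranspose_lindbladDrift hH]
    abel
  refine ⟨hnoise, ?_⟩
  calc
    G * Xᴴ * σ = P * (G * Xᴴ * σ) := by
      rw [mul_assoc, ← mul_mpinv_mul_conjTranspose_mul hσ.1 hXP, hrange]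
    _ = -(P * Gᴴ * Xᴴ * σ) - ∑ k, P * ((L k)ᴴ * L k * Xᴴ * σ) := by
      conv_lhs => rw [hG]
      simp only [sub_mul, mul_sub, neg_mul, mul_neg, Finset.sum_mul, Finset.mul_sum, mul_assoc]
    _ = Xᴴ * (-Gᴴ - ∑ k, (L k)ᴴ * L k) * σ := by
      simp only [← hdrift, hnoise_sq, sub_mul, mul_sub, neg_mul, mul_neg, Finset.sum_mul,
        Finset.mul_sum]
    _ = Xᴴ * G * σ := by rw [← hG]

/-- The operators that are stationary for the Lindblad generator and live on the range of `σ`, in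
the sense that `P X = X = X P` for the orthogonal projection `P` onto that range. -/
noncomputable def stationaryCorner (H : Matrix ι ι ℂ) (L : Fin m → Matrix ι ι ℂ)
    (σ : Matrix ι ι ℂ) : Submodule ℂ (Matrix ι ι ℂ) :=
  LinearMap.ker (lindbladMap H L) ⊓
    (LinearMap.eqLocus (LinearMap.mulLeft ℂ (supportProj σ)) LinearMap.id ⊓
      LinearMap.eqLocus (LinearMap.mulRight ℂ (supportProj σ)) LinearMap.id)

theorem mem_stationaryCorner {X : Matrix ι ι ℂ} : X ∈ stationaryCorner H L σ ↔
    lindbladMap H L X = 0 ∧ supportProj σ * X = X ∧ X * supportProj σ = X :=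
  Iff.rfl

theorem conjTranspose_mem_stationaryCorner (hH : H.IsHermitian) (hσ : σ.IsHermitian)
    {X : Matrix ι ι ℂ} (hX : X ∈ stationaryCorner H L σ) : Xᴴ ∈ stationaryCorner H L σ := by
  obtain ⟨hLX, hPX, hXP⟩ := mem_stationaryCorner.1 hX
  have hP := (isHermitian_supportProj hσ).eq
  refine mem_stationaryCorner.2 ⟨?_, ?_, ?_⟩
  · rw [lindbladMap_conjTranspose hH, hLX, conjTranspose_zero]
  · rw [← hP, ← conjTranspose_mul, hXP]
  · rw [← hP, ← conjTranspose_mul, hPX]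

theorem commutesOnRange_mul_mpinv (hH : H.IsHermitian) (hσ : σ.PosSemidef)
    (hfix : lindbladMap H L σ = 0) {A : Matrix ι ι ℂ} (hA : A ∈ stationaryCorner H L σ) :
    CommutesOnRange H L σ (A * mpinv σ) := by
  obtain ⟨hLA, -, hAP⟩ := mem_stationaryCorner.1 hA
  rw [commutesOnRange_iff hH hσ hfix, mul_assoc, mpinv_mul_self hσ.1, hAP, hLA]

theorem mul_mpinv_mul_mem_stationaryCorner (hH : H.IsHermitian) (hσ : σ.PosSemidef)
    (hfix : lindbladMap H L σ = 0) {A B : Matrix ι ι ℂ} (hA : A ∈ stationaryCorner H L σ)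
    (hB : B ∈ stationaryCorner H L σ) : A * mpinv σ * B ∈ stationaryCorner H L σ := by
  obtain ⟨-, hPA, -⟩ := mem_stationaryCorner.1 hA
  obtain ⟨hLB, hPB, hBP⟩ := mem_stationaryCorner.1 hB
  have hfactor : B = σ * (mpinv σ * B) := by rw [← mul_assoc, ← supportProj, hPB]
  refine mem_stationaryCorner.2 ⟨?_, ?_, ?_⟩
  · rw [hfactor, (commutesOnRange_mul_mpinv hH hσ hfix hA).lindbladMap_mul hH, ← hfactor, hLB,
      mul_zero]
  · rw [← mul_assoc, ← mul_assoc, hPA]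
  · rw [mul_assoc, hBP]

theorem mul_mul_mpinv_mem_stationaryCorner (hH : H.IsHermitian) (hσ : σ.PosSemidef)
    (hfix : lindbladMap H L σ = 0) {A : Matrix ι ι ℂ} (hA : A ∈ stationaryCorner H L σ) :
    σ * A * mpinv σ ∈ stationaryCorner H L σ := by
  have hAP : A * mpinv σ * supportProj σ = A * mpinv σ := by
    rw [mul_assoc, mpinv_mul_supportProj hσ.1]
  refine mem_stationaryCorner.2 ⟨?_, ?_, ?_⟩
  · have hadj : lindbladMap H L ((A * mpinv σ)ᴴ * σ) = 0 :=
      (commutesOnRange_iff hH hσ hfix).1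
        ((commutesOnRange_mul_mpinv hH hσ hfix hA).conjTranspose hH hσ hfix hAP)
    have hconj : σ * A * mpinv σ = ((A * mpinv σ)ᴴ * σ)ᴴ := by
      rw [conjTranspose_mul, conjTranspose_conjTranspose, hσ.1.eq, mul_assoc]
    rw [hconj, lindbladMap_conjTranspose hH, hadj, conjTranspose_zero]
  · rw [← mul_assoc, ← mul_assoc, supportProj_mul_self hσ.1]
  · rw [mul_assoc, mpinv_mul_supportProj hσ.1]

theorem Fdist_le_stationaryCorner (hH : H.IsHermitian) (hσ : σ.PosSemidef)
    (hfix : lindbladMap H L σ = 0) {W : Set (Matrix ι ι ℂ)}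
    (hW : W ⊆ stationaryCorner H L σ) : Fdist σ W ≤ stationaryCorner H L σ :=
  sInf_le ⟨hW, fun _ hX => conjTranspose_mem_stationaryCorner hH hσ.1 hX,
    fun _ hX _ hY => mul_mpinv_mul_mem_stationaryCorner hH hσ hfix hX hY,
    fun _ hX => msqrt_mul_mul_mpinv_msqrt_mem hσ
      (fun _ hY => mul_mul_mpinv_mem_stationaryCorner hH hσ hfix hY) hX⟩

end StationaryCorner

section Bipartite

open scoped Kronecker

variable {α β : Type*}

theorem conjTranspose_kronecker_one [DecidableEq β] (A : Matrix α α ℂ) :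
    (A ⊗ₖ (1 : Matrix β β ℂ))ᴴ = Aᴴ ⊗ₖ (1 : Matrix β β ℂ) := by
  rw [conjTranspose_kronecker, conjTranspose_one]

variable [Fintype β]

theorem posSemidef_ptraceB {ρ : Matrix (α × β) (α × β) ℂ} (hρ : ρ.PosSemidef) :
    (ptraceB ρ).PosSemidef := by
  have hsum : ptraceB ρ = ∑ k : β, ρ.submatrix (fun i => (i, k)) fun i => (i, k) := by
    ext i j
    simp [ptraceB, Matrix.sum_apply]
  rw [hsum]
  exact posSemidef_sum _ fun k _ => hρ.submatrix _

variable [Fintype α]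

theorem trace_ptraceB (X : Matrix (α × β) (α × β) ℂ) : (ptraceB X).trace = X.trace := by
  simp [ptraceB, Matrix.trace, Fintype.sum_prod_type]

variable [DecidableEq β]

theorem ptraceB_kronecker_one_mul (A : Matrix α α ℂ) (X : Matrix (α × β) (α × β) ℂ) :
    ptraceB (A ⊗ₖ (1 : Matrix β β ℂ) * X) = A * ptraceB X := by
  ext i j
  simp only [ptraceB, Matrix.of_apply, Matrix.mul_apply, Fintype.sum_prod_type,
    Matrix.kroneckerMap_apply, Matrix.one_apply, mul_ite, mul_one, mul_zero, ite_mul, zero_mul,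
    Finset.sum_ite_eq, Finset.mem_univ, if_true, Finset.mul_sum]
  rw [Finset.sum_comm]

theorem ptraceB_mul_kronecker_one (A : Matrix α α ℂ) (X : Matrix (α × β) (α × β) ℂ) :
    ptraceB (X * A ⊗ₖ (1 : Matrix β β ℂ)) = ptraceB X * A := by
  ext i j
  simp only [ptraceB, Matrix.of_apply, Matrix.mul_apply, Fintype.sum_prod_type,
    Matrix.kroneckerMap_apply, Matrix.one_apply, mul_ite, mul_one, mul_zero,
    Finset.sum_ite_eq', Finset.mem_univ, if_true, Finset.sum_mul]
  rw [Finset.sum_comm]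

theorem kronecker_one_mul_eq_zero_of_mul_ptraceB {ρ : Matrix (α × β) (α × β) ℂ}
    (hρ : ρ.PosSemidef) {Q : Matrix α α ℂ} (hQ : Q * ptraceB ρ = 0) :
    Q ⊗ₖ (1 : Matrix β β ℂ) * ρ = 0 := by
  apply mul_eq_zero_of_trace_mul_mul_conjTranspose_eq_zero hρ
  rw [conjTranspose_kronecker_one, ← trace_ptraceB, ptraceB_mul_kronecker_one,
    ptraceB_kronecker_one_mul, hQ, zero_mul, trace_zero]

theorem supportProj_ptraceB_kronecker_one_mul {ρ : Matrix (α × β) (α × β) ℂ}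
    (hρ : ρ.PosSemidef) : supportProj (ptraceB ρ) ⊗ₖ (1 : Matrix β β ℂ) * ρ = ρ := by
  classical
  have hQ : (1 - supportProj (ptraceB ρ)) * ptraceB ρ = 0 := by
    rw [sub_mul, one_mul, supportProj_mul_self (posSemidef_ptraceB hρ).1, sub_self]
  have hsub : (1 - supportProj (ptraceB ρ)) ⊗ₖ (1 : Matrix β β ℂ) =
      1 - supportProj (ptraceB ρ) ⊗ₖ (1 : Matrix β β ℂ) := by
    rw [eq_sub_iff_add_eq, ← add_kronecker, sub_add_cancel, one_kronecker_one]
  have hzero := kronecker_one_mul_eq_zero_of_mul_ptraceB hρ hQ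
  rwa [hsub, sub_mul, one_mul, sub_eq_zero, eq_comm] at hzero

theorem mul_supportProj_ptraceB_kronecker_one {ρ : Matrix (α × β) (α × β) ℂ}
    (hρ : ρ.PosSemidef) : ρ * supportProj (ptraceB ρ) ⊗ₖ (1 : Matrix β β ℂ) = ρ := by
  have hadj := congrArg conjTranspose (supportProj_ptraceB_kronecker_one_mul hρ)
  rwa [conjTranspose_mul, conjTranspose_kronecker_one, hρ.1.eq,
    (isHermitian_supportProj (posSemidef_ptraceB hρ).1).eq] at hadj

variable [DecidableEq α] {m : ℕ}

/-- The map `X ↦ Tr_B[(1 ⊗ B) X]`, whose values at `ρ` form the operator Schmidt span of `ρ`. -/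
noncomputable def weightedPtraceB (B : Matrix β β ℂ) :
    Matrix (α × β) (α × β) ℂ →ₗ[ℂ] Matrix α α ℂ where
  toFun X := ptraceB ((1 : Matrix α α ℂ) ⊗ₖ B * X)
  map_add' X Y := by
    ext i j
    simp only [ptraceB, mul_add, of_apply, Matrix.add_apply, Finset.sum_add_distrib]
  map_smul' c X := by
    ext i j
    simp only [ptraceB, Matrix.mul_smul, of_apply, Matrix.smul_apply, Finset.smul_sum,
      RingHom.id_apply]

theorem mem_opSchmidtA {ρ : Matrix (α × β) (α × β) ℂ} {A : Matrix α α ℂ} :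
    A ∈ opSchmidtA ρ ↔ ∃ B, A = weightedPtraceB B ρ :=
  Iff.rfl

theorem weightedPtraceB_one (X : Matrix (α × β) (α × β) ℂ) :
    weightedPtraceB (1 : Matrix β β ℂ) X = ptraceB X :=
  (ptraceB_kronecker_one_mul 1 X).trans (one_mul _)

theorem weightedPtraceB_kronecker_one_mul (A : Matrix α α ℂ) (B : Matrix β β ℂ)
    (X : Matrix (α × β) (α × β) ℂ) :
    weightedPtraceB B (A ⊗ₖ (1 : Matrix β β ℂ) * X) = A * weightedPtraceB B X := calc
  ptraceB (1 ⊗ₖ B * (A ⊗ₖ (1 : Matrix β β ℂ) * X))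
      = ptraceB (A ⊗ₖ (1 : Matrix β β ℂ) * (1 ⊗ₖ B * X)) := by
        simp only [← mul_assoc, ← mul_kronecker_mul, mul_one, one_mul]
  _ = A * ptraceB (1 ⊗ₖ B * X) := ptraceB_kronecker_one_mul A _

theorem weightedPtraceB_mul_kronecker_one (A : Matrix α α ℂ) (B : Matrix β β ℂ)
    (X : Matrix (α × β) (α × β) ℂ) :
    weightedPtraceB B (X * A ⊗ₖ (1 : Matrix β β ℂ)) = weightedPtraceB B X * A := calc
  ptraceB (1 ⊗ₖ B * (X * A ⊗ₖ (1 : Matrix β β ℂ)))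
      = ptraceB (1 ⊗ₖ B * X * A ⊗ₖ (1 : Matrix β β ℂ)) := by rw [mul_assoc]
  _ = ptraceB (1 ⊗ₖ B * X) * A := ptraceB_mul_kronecker_one A _

theorem lindbladMap_weightedPtraceB (H : Matrix α α ℂ) (L : Fin m → Matrix α α ℂ)
    (B : Matrix β β ℂ) (X : Matrix (α × β) (α × β) ℂ) :
    lindbladMap H L (weightedPtraceB B X) = weightedPtraceB B
      (lindbladMap (H ⊗ₖ (1 : Matrix β β ℂ)) (fun k => L k ⊗ₖ (1 : Matrix β β ℂ)) X) := by
  simp only [lindbladMap, LinearMap.add_apply, LinearMap.smul_apply, LinearMap.sub_apply,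
    LinearMap.sum_apply, LinearMap.comp_apply, LinearMap.mulLeft_apply, LinearMap.mulRight_apply,
    map_add, map_smul, map_sub, map_sum, conjTranspose_kronecker_one, ← mul_kronecker_mul, mul_one,
    weightedPtraceB_kronecker_one_mul, weightedPtraceB_mul_kronecker_one]

theorem lindbladMap_kronecker (H : Matrix α α ℂ) (L : Fin m → Matrix α α ℂ) (A : Matrix α α ℂ)
    (B : Matrix β β ℂ) :
    lindbladMap (H ⊗ₖ (1 : Matrix β β ℂ)) (fun k => L k ⊗ₖ (1 : Matrix β β ℂ)) (A ⊗ₖ B) =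
      lindbladMap H L A ⊗ₖ B := by
  let kroneckerRight := (kroneckerBilinear (R := ℂ) (l := α) (m := α)).flip B
  have hkron (X : Matrix α α ℂ) : X ⊗ₖ B = kroneckerRight X := rfl
  simp only [lindbladMap, LinearMap.add_apply, LinearMap.smul_apply, LinearMap.sub_apply,
    LinearMap.sum_apply, LinearMap.comp_apply, LinearMap.mulLeft_apply, LinearMap.mulRight_apply,
    conjTranspose_kronecker_one, ← mul_kronecker_mul, mul_one, one_mul]
  simp only [hkron, map_add, map_smul, map_sub, map_sum]

theorem opSchmidtA_subset_stationaryCorner {H : Matrix α α ℂ} {L : Fin m → Matrix α α ℂ}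
    {ρ : Matrix (α × β) (α × β) ℂ} (hρ : ρ.PosSemidef)
    (hfix : lindbladMap (H ⊗ₖ (1 : Matrix β β ℂ)) (fun k => L k ⊗ₖ (1 : Matrix β β ℂ)) ρ = 0) :
    opSchmidtA ρ ⊆ stationaryCorner H L (ptraceB ρ) := by
  intro A hA
  obtain ⟨B, rfl⟩ := mem_opSchmidtA.1 hA
  refine mem_stationaryCorner.2 ⟨?_, ?_, ?_⟩
  · rw [lindbladMap_weightedPtraceB, hfix, map_zero]
  · rw [← weightedPtraceB_kronecker_one_mul, supportProj_ptraceB_kronecker_one_mul hρ]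
  · rw [← weightedPtraceB_mul_kronecker_one, mul_supportProj_ptraceB_kronecker_one hρ]

end Bipartite

/-! ### Statement 6 -/

theorem stmt6
    {α β : Type*} [Fintype α] [Fintype β] [DecidableEq α] [DecidableEq β]
    (HN : Matrix α α ℂ) (hHN : HN.IsHermitian) {m : ℕ} (Lk : Fin m → Matrix α α ℂ)
    (ρ : Matrix (α × β) (α × β) ℂ) (hρ : IsDensity ρ)
    (hρfix : lindbladMap (Matrix.kroneckerMap (· * ·) HN (1 : Matrix β β ℂ))
      (fun k => Matrix.kroneckerMap (· * ·) (Lk k) (1 : Matrix β β ℂ)) ρ = 0) :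
    Submodule.span ℂ {X : Matrix (α × β) (α × β) ℂ |
        ∃ A ∈ Fdist (ptraceB ρ) (opSchmidtA ρ), ∃ B : Matrix β β ℂ,
          X = Matrix.kroneckerMap (· * ·) A B} ≤
      LinearMap.ker (lindbladMap (Matrix.kroneckerMap (· * ·) HN (1 : Matrix β β ℂ))
        fun k => Matrix.kroneckerMap (· * ·) (Lk k) (1 : Matrix β β ℂ)) := by
  rw [Submodule.span_le]
  rintro _ ⟨A, hA, B, rfl⟩
  have hSchmidt : opSchmidtA ρ ⊆ stationaryCorner HN Lk (ptraceB ρ) :=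
    opSchmidtA_subset_stationaryCorner hρ.1 hρfix
  have hfix : lindbladMap HN Lk (ptraceB ρ) = 0 :=
    (mem_stationaryCorner.1 (hSchmidt (mem_opSchmidtA.2 ⟨1, (weightedPtraceB_one ρ).symm⟩))).1
  have hLA : lindbladMap HN Lk A = 0 := (mem_stationaryCorner.1
    (Fdist_le_stationaryCorner hHN (posSemidef_ptraceB hρ.1) hfix hSchmidt hA)).1
  exact (lindbladMap_kronecker HN Lk A B).trans (by rw [hLA, zero_kronecker])

end QDS
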